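/- Let τ ∈ ℂ with Im τ > 0, let u ∈ ℝ with 0 ≤ u ≤ 1, and for ξ ∈ ℂ set r(ξ) := Im ξ / Im τ. Define Ω_u(ξ, α) := exp(2πi · u · r(ξ) · α) · F(ξ, α, τ). Then for all ξ, α ∈ ℂ with θ(ξ, τ) ≠ 0 and θ(α, τ) ≠ 0 and all integers l, m: Ω_u(ξ + l + m·τ, α) = exp(2πi(u − 1) m α) · Ω_u(ξ, α). -/

import Mathlib

open Complex

/-- The "two thirds of the Jacobi triple product formula":
`θ(ξ, τ) = q^{1/12} (z^{1/2} - z^{-1/2}) ∏_{j≥1} (1 - qʲz) ∏_{j≥1} (1 - qʲz⁻¹)`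
with `q = exp(2πiτ)`, `z = exp(2πiξ)`. -/
noncomputable def theta (ξ τ : ℂ) : ℂ :=
  Complex.exp ((Real.pi : ℂ) * Complex.I * τ / 6) *
    (Complex.exp ((Real.pi : ℂ) * Complex.I * ξ) -
      Complex.exp (-((Real.pi : ℂ) * Complex.I * ξ))) *
    (∏' j : ℕ, (1 - Complex.exp (2 * (Real.pi : ℂ) * Complex.I * (((j : ℂ) + 1) * τ + ξ)))) *
    (∏' j : ℕ, (1 - Complex.exp (2 * (Real.pi : ℂ) * Complex.I * (((j : ℂ) + 1) * τ - ξ))))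

/-- The Kronecker function `F(ξ, η, τ) = θ′(0, τ) · θ(ξ + η, τ) / (θ(ξ, τ) · θ(η, τ))`,
where `θ′(0, τ)` is the derivative of `ξ ↦ θ(ξ, τ)` at `ξ = 0`. -/
noncomputable def kronF (ξ η τ : ℂ) : ℂ :=
  deriv (fun z => theta z τ) 0 * theta (ξ + η) τ / (theta ξ τ * theta η τ)

/-- The parametrized form `Ω_u(ξ, α) = exp(2πi·u·r(ξ)·α) · F(ξ, α, τ)` where
`r(ξ) = Im ξ / Im τ`. -/
noncomputable def OmegaU (τ : ℂ) (u : ℝ) (ξ α : ℂ) : ℂ :=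
  Complex.exp (2 * (Real.pi : ℂ) * Complex.I * (u : ℂ) * ((ξ.im / τ.im : ℝ) : ℂ) * α) *
    kronF ξ α τ

noncomputable def auxB (x τ : ℂ) : ℂ :=
  ∏' j : ℕ, (1 - Complex.exp (2 * (Real.pi : ℂ) * Complex.I * (((j : ℂ) + 1) * τ + x)))

lemma aux_mult (τ : ℂ) (hτ : 0 < τ.im) (x : ℂ) : Multipliable (fun j : ℕ =>
    (1 - Complex.exp (2 * (Real.pi : ℂ) * Complex.I * (((j : ℂ) + 1) * τ + x)))) := by
  have hq : ‖Complex.exp (2 * (Real.pi : ℂ) * Complex.I * τ)‖ < 1 := by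
    rw [Complex.norm_exp]
    have : (2 * (Real.pi : ℂ) * Complex.I * τ).re = -(2 * Real.pi * τ.im) := by
      simp
    rw [this, Real.exp_lt_one_iff]
    have := Real.pi_pos
    have : 0 < 2 * Real.pi * τ.im := by positivity
    linarith
  have hs : Summable (fun j : ℕ =>
      ‖-Complex.exp (2 * (Real.pi : ℂ) * Complex.I * (((j : ℂ) + 1) * τ + x))‖) := by
    have h := (summable_geometric_of_lt_one (norm_nonneg _) hq).mul_right
      ‖Complex.exp (2 * (Real.pi : ℂ) * Complex.I * (τ + x))‖
    refine h.congr ?_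
    intro j
    rw [norm_neg, ← norm_pow, ← norm_mul, ← Complex.exp_nat_mul, ← Complex.exp_add]
    congr 2
    ring
  simpa [sub_eq_add_neg] using multipliable_one_add_of_summable hs

lemma auxB_shift (τ : ℂ) (hτ : 0 < τ.im) (x : ℂ) :
    auxB (x - τ) τ = (1 - Complex.exp (2 * (Real.pi : ℂ) * Complex.I * x)) * auxB x τ := by
  have key : ∀ j : ℕ, (1 - Complex.exp (2 * (Real.pi : ℂ) * Complex.I *
      ((((j + 1 : ℕ) : ℂ) + 1) * τ + (x - τ)))) =
      (1 - Complex.exp (2 * (Real.pi : ℂ) * Complex.I * (((j : ℂ) + 1) * τ + x))) := by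
    intro j
    congr 3
    push_cast
    ring
  unfold auxB
  rw [tprod_eq_zero_mul']
  · simp only [key]
    congr 4
    push_cast
    ring
  · simp only [key]
    exact aux_mult τ hτ x

lemma auxB_one (τ x : ℂ) : auxB (x + 1) τ = auxB x τ := by
  unfold auxB
  congr 1
  ext j
  rw [show 2 * (Real.pi : ℂ) * Complex.I * (((j : ℂ) + 1) * τ + (x + 1)) =
    2 * (Real.pi : ℂ) * Complex.I * (((j : ℂ) + 1) * τ + x) + 2 * (Real.pi : ℂ) * Complex.I by ring,
    Complex.exp_periodic]

lemma theta_eq (ξ τ : ℂ) : theta ξ τ = Complex.exp ((Real.pi : ℂ) * Complex.I * τ / 6) *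
    (Complex.exp ((Real.pi : ℂ) * Complex.I * ξ) -
      Complex.exp (-((Real.pi : ℂ) * Complex.I * ξ))) * auxB ξ τ * auxB (-ξ) τ := by
  simp only [theta, auxB, sub_eq_add_neg]

lemma theta_one (ξ τ : ℂ) : theta (ξ + 1) τ = - theta ξ τ := by
  have h := auxB_one τ (-(ξ + 1))
  rw [show -(ξ + 1) + 1 = -ξ by ring] at h
  rw [theta_eq, theta_eq, auxB_one, ← h]
  rw [show (Real.pi : ℂ) * Complex.I * (ξ + 1) =
    (Real.pi : ℂ) * Complex.I * ξ + (Real.pi : ℂ) * Complex.I by ring, neg_add,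
    Complex.exp_add, Complex.exp_add, Complex.exp_neg (_ * Complex.I), Complex.exp_pi_mul_I]
  norm_num
  ring

lemma theta_tau (τ : ℂ) (hτ : 0 < τ.im) (ξ : ℂ) : theta (ξ + τ) τ =
    -Complex.exp (-((Real.pi : ℂ) * Complex.I * τ)) *
      Complex.exp (-(2 * (Real.pi : ℂ) * Complex.I * ξ)) * theta ξ τ := by
  have h1 := auxB_shift τ hτ (ξ + τ)
  have h2 := auxB_shift τ hτ (-ξ)
  rw [show ξ + τ - τ = ξ by ring] at h1
  rw [show -ξ - τ = -(ξ + τ) by ring] at h2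
  rw [theta_eq, theta_eq, h1, h2]
  rw [show 2 * (Real.pi : ℂ) * Complex.I * (ξ + τ) =
      (Real.pi : ℂ) * Complex.I * ξ + (Real.pi : ℂ) * Complex.I * ξ +
      ((Real.pi : ℂ) * Complex.I * τ + (Real.pi : ℂ) * Complex.I * τ) by ring,
    show 2 * (Real.pi : ℂ) * Complex.I * (-ξ) =
      -((Real.pi : ℂ) * Complex.I * ξ) + -((Real.pi : ℂ) * Complex.I * ξ) by ring,
    show -(2 * (Real.pi : ℂ) * Complex.I * ξ) =
      -((Real.pi : ℂ) * Complex.I * ξ) + -((Real.pi : ℂ) * Complex.I * ξ) by ring,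
    mul_add (_ * _) ξ τ, neg_add]
  simp only [Complex.exp_add, Complex.exp_neg]
  have e1 := Complex.exp_ne_zero ((Real.pi : ℂ) * Complex.I * ξ)
  have e2 := Complex.exp_ne_zero ((Real.pi : ℂ) * Complex.I * τ)
  field_simp
  ring

lemma kronF_one (ξ α τ : ℂ) : kronF (ξ + 1) α τ = kronF ξ α τ := by
  unfold kronF
  rw [show ξ + 1 + α = (ξ + α) + 1 by ring, theta_one, theta_one]
  rw [mul_neg, neg_mul, neg_div_neg_eq]

lemma kronF_tau (τ : ℂ) (hτ : 0 < τ.im) (ξ α : ℂ) : kronF (ξ + τ) α τ =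
    Complex.exp (-(2 * (Real.pi : ℂ) * Complex.I * α)) * kronF ξ α τ := by
  unfold kronF
  rw [show ξ + τ + α = (ξ + α) + τ by ring, theta_tau τ hτ, theta_tau τ hτ,
    mul_add (_ * _) ξ α, neg_add, Complex.exp_add]
  have e1 := Complex.exp_ne_zero (-((Real.pi : ℂ) * Complex.I * τ))
  have e2 := Complex.exp_ne_zero (-(2 * (Real.pi : ℂ) * Complex.I * ξ))
  generalize Complex.exp (-((Real.pi : ℂ) * Complex.I * τ)) = a at *
  generalize Complex.exp (-(2 * (Real.pi : ℂ) * Complex.I * ξ)) = b at *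
  rw [← mul_div_assoc, ← mul_div_mul_left _ (theta ξ τ * theta α τ)
    (neg_ne_zero.mpr (mul_ne_zero e1 e2))]
  congr 1 <;> ring

lemma kronF_int (ξ α τ : ℂ) (l : ℤ) : kronF (ξ + l) α τ = kronF ξ α τ := by
  have h : Function.Periodic (fun z => kronF z α τ) 1 := fun z => kronF_one z α τ
  simpa using h.int_mul l ξ

lemma kronF_int_tau (τ : ℂ) (hτ : 0 < τ.im) (ξ α : ℂ) (m : ℤ) : kronF (ξ + m * τ) α τ =
    Complex.exp (-(2 * (Real.pi : ℂ) * Complex.I * m * α)) * kronF ξ α τ := by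
  have h : Function.Periodic (fun z : ℤ => Complex.exp (2 * (Real.pi : ℂ) * Complex.I * z * α) *
      kronF (ξ + z * τ) α τ) 1 := by
    intro z
    simp only
    rw [show ξ + ((z + 1 : ℤ) : ℂ) * τ = (ξ + z * τ) + τ by push_cast; ring, kronF_tau τ hτ,
      ← mul_assoc, ← Complex.exp_add]
    congr 2
    push_cast
    ring
  have h2 := h.int_mul m 0
  simp at h2
  rw [← h2, ← mul_assoc, ← Complex.exp_add]
  simp

/-- `Ω_u(ξ + l + mτ, α) = exp(2πi(u-1)mα) · Ω_u(ξ, α)`. -/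
theorem stmt_14 (τ : ℂ) (hτ : 0 < τ.im) (u : ℝ) (hu0 : 0 ≤ u) (hu1 : u ≤ 1)
    (ξ α : ℂ) (hξ : theta ξ τ ≠ 0) (hα : theta α τ ≠ 0) (l m : ℤ) :
    OmegaU τ u (ξ + (l : ℂ) + (m : ℂ) * τ) α =
      Complex.exp (2 * (Real.pi : ℂ) * Complex.I * ((u : ℂ) - 1) * (m : ℂ) * α) *
        OmegaU τ u ξ α := by
  have him : ((((ξ + (l : ℂ) + (m : ℂ) * τ).im / τ.im : ℝ)) : ℂ) =
      ((ξ.im / τ.im : ℝ) : ℂ) + m := by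
    have : (ξ + (l : ℂ) + (m : ℂ) * τ).im / τ.im = ξ.im / τ.im + m := by
      simp
      field_simp
    rw [this]
    push_cast
    rfl
  unfold OmegaU
  rw [him, kronF_int_tau τ hτ, kronF_int, ← mul_assoc, ← mul_assoc, ← Complex.exp_add,
    ← Complex.exp_add]
  congr 2
  ring
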